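/- Let Ω be a bounded domain and suppose grid functions satisfy the discrete Sobolev inequalities ‖∇_h f‖₄ ≤ C₀‖Δ_h f‖₂ and ‖f‖_∞ ≤ C₀(‖f‖₂ + ‖Δ_h f‖₂). Then for any two periodic grid functions f, g, the product rule estimate holds: ‖Δ_h(fg)‖₂ ≤ (√3 + 2)C₀²(‖f‖₂ + ‖Δ_h f‖₂)(‖g‖₂ + ‖Δ_h g‖₂). -/

import Mathlib

/-- A uniform periodic grid of the unit cube with `N` points in each direction. -/
abbrev Grid (N : ℕ) := ZMod N × ZMod N × ZMod N

/-- Forward difference in the `x` direction (mesh size `h = 1/N`). -/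
noncomputable def Dx {N : ℕ} (f : Grid N → ℝ) : Grid N → ℝ :=
  fun p => (N : ℝ) * (f (p.1 + 1, p.2) - f p)

/-- Forward difference in the `y` direction. -/
noncomputable def Dy {N : ℕ} (f : Grid N → ℝ) : Grid N → ℝ :=
  fun p => (N : ℝ) * (f (p.1, p.2.1 + 1, p.2.2) - f p)

/-- Forward difference in the `z` direction. -/
noncomputable def Dz {N : ℕ} (f : Grid N → ℝ) : Grid N → ℝ :=
  fun p => (N : ℝ) * (f (p.1, p.2.1, p.2.2 + 1) - f p)

/-- Centered second difference in the `x` direction. -/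
noncomputable def Dx2 {N : ℕ} (f : Grid N → ℝ) : Grid N → ℝ :=
  fun p => (N : ℝ) ^ 2 * (f (p.1 + 1, p.2) - 2 * f p + f (p.1 - 1, p.2))

/-- Centered second difference in the `y` direction. -/
noncomputable def Dy2 {N : ℕ} (f : Grid N → ℝ) : Grid N → ℝ :=
  fun p => (N : ℝ) ^ 2 * (f (p.1, p.2.1 + 1, p.2.2) - 2 * f p + f (p.1, p.2.1 - 1, p.2.2))

/-- Centered second difference in the `z` direction. -/
noncomputable def Dz2 {N : ℕ} (f : Grid N → ℝ) : Grid N → ℝ :=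
  fun p => (N : ℝ) ^ 2 * (f (p.1, p.2.1, p.2.2 + 1) - 2 * f p + f (p.1, p.2.1, p.2.2 - 1))

/-- The standard discrete Laplacian `Δ_h = D_x² + D_y² + D_z²`. -/
noncomputable def lap {N : ℕ} (f : Grid N → ℝ) : Grid N → ℝ :=
  fun p => Dx2 f p + Dy2 f p + Dz2 f p

/-- Discrete `ℓ²` norm: `‖f‖₂ = (h³ ∑ |f|²)^{1/2}` with `h³ = 1/N³`. -/
noncomputable def norm2 {N : ℕ} [NeZero N] (f : Grid N → ℝ) : ℝ :=
  Real.sqrt ((1 / (N : ℝ) ^ 3) * ∑ p : Grid N, (f p) ^ 2)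

/-- Discrete maximum norm. -/
noncomputable def normInf {N : ℕ} [NeZero N] (f : Grid N → ℝ) : ℝ :=
  ⨆ p : Grid N, |f p|

/-- Discrete `ℓ⁴` norm of the gradient: `(‖D_x f‖₄⁴ + ‖D_y f‖₄⁴ + ‖D_z f‖₄⁴)^{1/4}`. -/
noncomputable def gradNorm4 {N : ℕ} [NeZero N] (f : Grid N → ℝ) : ℝ :=
  ((1 / (N : ℝ) ^ 3) *
      ∑ p : Grid N, ((Dx f p) ^ 4 + (Dy f p) ^ 4 + (Dz f p) ^ 4)) ^ ((1 : ℝ) / 4)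

/-!
The discrete Leibniz rule reads `Δ(fg) = fΔg + gΔf + ∑ᵢ (Dᵢ⁺f Dᵢ⁺g + Dᵢ⁻f Dᵢ⁻g)`. The first two
terms are bounded by the maximum norms of `f` and `g`, and the test function `1` shows `C₀ ≥ 1`.
Each difference quotient `Dᵢf` has mean zero along direction `i`, so Poincaré's inequality on
cycles and a Ladyzhenskaya inequality with explicit constant give `‖Dᵢf‖₄⁴ ≤ ¾ ‖∇Dᵢf‖₂⁴`, while
summation by parts gives `∑ᵢ ‖∇Dᵢf‖₂² = ‖Δf‖₂²`. By Hölder and Cauchy-Schwarz over `i`, each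
one-sided sum of cross terms is therefore at most `(√3 / 2) ‖Δf‖₂ ‖Δg‖₂`.
-/

open Finset

open scoped fwdDiff

section FiniteDifferences

variable {G : Type*} [AddCommGroup G]

lemma fwdDiff_comm {A : Type*} [AddCommGroup A] (a b : G) (f : G → A) :
    Δ_[a] (Δ_[b] f) = Δ_[b] (Δ_[a] f) := by
  funext p
  simp only [fwdDiff, add_right_comm p a b]
  abel

lemma sum_fwdDiff_mul {R : Type*} [NonUnitalNonAssocRing R] [Fintype G] (a : G) (f g : G → R) :
    ∑ p, Δ_[a] f p * g p = ∑ p, f p * Δ_[-a] g p := by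
  have translate : ∑ p, f (p + a) * g p = ∑ p, f p * g (p + -a) := by
    simpa using Equiv.sum_comp (Equiv.addRight a) fun p => f p * g (p + -a)
  simp only [fwdDiff, sub_mul, mul_sub, sum_sub_distrib, translate]

/-- The undivided centered second difference `f (p + e) - 2 f p + f (p - e)`, written as the sum of
the first differences in the directions `e` and `-e`. -/
def secondDiff {A : Type*} [AddCommGroup A] (e : G) (f : G → A) : G → A := Δ_[e] f + Δ_[-e] f

lemma secondDiff_eq_neg_fwdDiff_neg {A : Type*} [AddCommGroup A] (e : G) (f : G → A) :
    secondDiff e f = -Δ_[-e] (Δ_[e] f) := by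
  funext p
  simp [secondDiff, fwdDiff, sub_eq_add_neg]

lemma secondDiff_mul {R : Type*} [CommRing R] (e : G) (f g : G → R) :
    secondDiff e (f * g) =
      f * secondDiff e g + g * secondDiff e f + Δ_[e] f * Δ_[e] g + Δ_[-e] f * Δ_[-e] g := by
  funext p
  simp only [secondDiff, fwdDiff, Pi.add_apply, Pi.mul_apply]
  ring

lemma sum_secondDiff_mul_secondDiff {R : Type*} [CommRing R] [Fintype G] (a b : G) (f : G → R) :
    ∑ p, secondDiff a f p * secondDiff b f p = ∑ p, Δ_[b] (Δ_[a] f) p ^ 2 := by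
  calc ∑ p, secondDiff a f p * secondDiff b f p
      = ∑ p, Δ_[-a] (Δ_[a] f) p * Δ_[-b] (Δ_[b] f) p := by
        simp only [secondDiff_eq_neg_fwdDiff_neg, Pi.neg_apply, neg_mul_neg]
    _ = ∑ p, Δ_[-a] (Δ_[b] (Δ_[a] f)) p * Δ_[b] f p := by
        rw [← sum_fwdDiff_mul, fwdDiff_comm b]
    _ = ∑ p, Δ_[b] (Δ_[a] f) p ^ 2 := by
        simp only [sum_fwdDiff_mul, neg_neg, fwdDiff_comm a b, sq]

/-- The undivided Dirichlet energy `∑ᵢ ∑ₚ |u (p + eᵢ) - u p|²` of `u` along the directions `eᵢ`. -/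
def dirichletEnergy {ι : Type*} [Fintype ι] [Fintype G] (e : ι → G) (u : G → ℝ) : ℝ :=
  ∑ i, ∑ p, Δ_[e i] u p ^ 2

lemma dirichletEnergy_nonneg {ι : Type*} [Fintype ι] [Fintype G] (e : ι → G) (u : G → ℝ) :
    0 ≤ dirichletEnergy e u := by
  unfold dirichletEnergy
  positivity

lemma sum_sq_sum_secondDiff {ι : Type*} [Fintype ι] [Fintype G] (e : ι → G) (f : G → ℝ) :
    ∑ p, (∑ i, secondDiff (e i) f p) ^ 2 = ∑ i, dirichletEnergy e (Δ_[e i] f) := by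
  simp only [dirichletEnergy, sq, sum_mul_sum]
  simp only [← sq, ← sum_secondDiff_mul_secondDiff]
  rw [sum_comm]
  exact sum_congr rfl fun i _ => sum_comm

end FiniteDifferences

section Cycle

variable {N : ℕ} [NeZero N]

lemma sum_zmod_eq_sum_range {A : Type*} [AddCommMonoid A] (F : ZMod N → A) (s : ZMod N) :
    ∑ k, F k = ∑ j ∈ range N, F (s + j) := by
  refine (sum_nbij' (fun j : ℕ => s + j) (fun k => (k - s).val) ?_ ?_ ?_ ?_ ?_).symm
  · simp
  · simp [ZMod.val_lt]
  · intro j hj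
    simp [ZMod.val_cast_of_lt (mem_range.mp hj)]
  · simp
  · simp

-- The two arcs joining `s` and `t` both have increment `|v t - v s|`, and together they make up the
-- whole cycle.
lemma sub_le_half_sum_abs_fwdDiff (v : ZMod N → ℝ) (s t : ZMod N) :
    v t - v s ≤ (∑ k, |Δ_[1] v k|) / 2 := by
  obtain ⟨n, hn, rfl⟩ : ∃ n : ℕ, n < N ∧ t = s + n := ⟨(t - s).val, ZMod.val_lt _, by simp⟩
  have telescope (m : ℕ) : ∑ j ∈ range m, Δ_[1] v (s + j) = v (s + m) - v s := by
    simpa [fwdDiff, add_assoc] using sum_range_sub (fun j : ℕ => v (s + j)) m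
  have forward_arc : v (s + n) - v s ≤ ∑ j ∈ range n, |Δ_[1] v (s + j)| := by
    rw [← telescope]
    exact sum_le_sum fun j _ => le_abs_self _
  have backward_arc : v (s + n) - v s ≤ ∑ j ∈ Ico n N, |Δ_[1] v (s + j)| := by
    have closed : ∑ j ∈ range N, Δ_[1] v (s + j) = 0 := by simp [telescope]
    rw [← sum_range_add_sum_Ico _ hn.le, telescope] at closed
    calc v (s + n) - v s = -∑ j ∈ Ico n N, Δ_[1] v (s + j) := by linarith
      _ ≤ ∑ j ∈ Ico n N, |Δ_[1] v (s + j)| := by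
        rw [← sum_neg_distrib]
        exact sum_le_sum fun j _ => neg_le_abs _
  rw [sum_zmod_eq_sum_range _ s, ← sum_range_add_sum_Ico _ hn.le]
  linarith

lemma le_average_add_half_sum_abs_fwdDiff (v : ZMod N → ℝ) (k : ZMod N) :
    v k ≤ (∑ j, v j) / N + (∑ j, |Δ_[1] v j|) / 2 := by
  have hN : (0 : ℝ) < N := Nat.cast_pos.mpr (NeZero.pos N)
  have h := sum_le_sum fun s (_ : s ∈ univ) => sub_le_half_sum_abs_fwdDiff v s k
  simp only [sum_sub_distrib, sum_const, card_univ, ZMod.card, nsmul_eq_mul] at h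
  rw [← sub_le_iff_le_add', ← mul_le_mul_iff_right₀ hN, mul_sub, mul_div_cancel₀ _ hN.ne']
  exact h

lemma four_mul_sum_sq_le_of_sum_eq_zero {v : ZMod N → ℝ} (hv : ∑ k, v k = 0) :
    4 * ∑ k, v k ^ 2 ≤ (N : ℝ) ^ 2 * ∑ k, Δ_[1] v k ^ 2 := by
  set T := ∑ k, |Δ_[1] v k|
  have pointwise (k : ZMod N) : v k ^ 2 ≤ (T / 2) ^ 2 := by
    have upper := le_average_add_half_sum_abs_fwdDiff v k
    have lower := le_average_add_half_sum_abs_fwdDiff (-v) k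
    have diff_neg (j : ZMod N) : |Δ_[1] (-v) j| = |Δ_[1] v j| := by
      simp [fwdDiff, ← abs_neg (v (j + 1) - v j), neg_add_eq_sub]
    simp only [diff_neg, Pi.neg_apply, sum_neg_distrib, hv, neg_zero, zero_div, zero_add]
      at upper lower
    exact sq_le_sq' (by linarith) upper
  have cauchy_schwarz : T ^ 2 ≤ N * ∑ k, Δ_[1] v k ^ 2 := by
    simpa using sq_sum_le_card_mul_sum_sq (s := univ) (f := fun k : ZMod N => |Δ_[1] v k|)
  calc 4 * ∑ k, v k ^ 2 ≤ 4 * ∑ _k : ZMod N, (T / 2) ^ 2 := by gcongr 4 * ∑ k, ?_; exact pointwise _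
    _ = N * T ^ 2 := by simp; ring
    _ ≤ N * (N * ∑ k, Δ_[1] v k ^ 2) := by gcongr
    _ = (N : ℝ) ^ 2 * ∑ k, Δ_[1] v k ^ 2 := by ring

lemma four_mul_sum_fwdDiff_sq_le {G : Type*} [AddCommGroup G] [Fintype G] {e : G} (he : N • e = 0)
    (f : G → ℝ) :
    4 * ∑ p, Δ_[e] f p ^ 2 ≤ (N : ℝ) ^ 2 * ∑ p, Δ_[e] (Δ_[e] f) p ^ 2 := by
  have hN : (0 : ℝ) < N := Nat.cast_pos.mpr (NeZero.pos N)
  obtain ⟨φ, rfl⟩ : ∃ φ : ZMod N →+ G, φ 1 = e :=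
    ⟨ZMod.lift N ⟨zmultiplesHom G e, by simpa using he⟩, by
      simpa using ZMod.lift_coe N ⟨zmultiplesHom G e, by simpa using he⟩ 1⟩
  have sum_lines (F : G → ℝ) : ∑ p, ∑ k, F (p + φ k) = N * ∑ p, F p := by
    rw [sum_comm]
    have translate (k : ZMod N) : ∑ p, F (p + φ k) = ∑ p, F p :=
      Equiv.sum_comp (Equiv.addRight (φ k)) F
    simp [translate]
  have fwdDiff_line (u : G → ℝ) (p : G) (k : ZMod N) :
      Δ_[1] (fun j => u (p + φ j)) k = Δ_[φ 1] u (p + φ k) := by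
    simp [fwdDiff, add_assoc]
  have line (p : G) :
      4 * ∑ k, Δ_[φ 1] f (p + φ k) ^ 2
        ≤ (N : ℝ) ^ 2 * ∑ k, Δ_[φ 1] (Δ_[φ 1] f) (p + φ k) ^ 2 := by
    have mean_zero : ∑ k, Δ_[φ 1] f (p + φ k) = 0 := by
      simp only [← fwdDiff_line f p]
      simp only [fwdDiff, sum_sub_distrib, sub_eq_zero]
      exact Equiv.sum_comp (Equiv.addRight 1) fun k => f (p + φ k)
    simpa only [fwdDiff_line] using four_mul_sum_sq_le_of_sum_eq_zero mean_zero
  have total := sum_le_sum fun p (_ : p ∈ univ) => line p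
  simp only [← mul_sum] at total
  rw [sum_lines fun p => Δ_[φ 1] f p ^ 2, sum_lines fun p => Δ_[φ 1] (Δ_[φ 1] f) p ^ 2] at total
  rw [← mul_le_mul_iff_right₀ hN]
  linarith

-- Agmon's inequality on a family of cycles. Choosing the point `c i` separately on each cycle gives
-- the sum of the maxima; a constant `c` gives the `ℓ²` norm of a slice.
lemma sum_sq_section_le {ι : Type*} [Fintype ι] (u : ι → ZMod N → ℝ) (c : ι → ZMod N) :
    ∑ i, u i (c i) ^ 2 ≤
      (∑ i, ∑ k, u i k ^ 2) / N + √(∑ i, ∑ k, u i k ^ 2) * √(∑ i, ∑ k, Δ_[1] (u i) k ^ 2) := by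
  set S := ∑ i, ∑ k, u i k ^ 2 with hS
  set P := ∑ i, ∑ k, Δ_[1] (u i) k ^ 2
  have sum_sq_add_le : ∑ i, ∑ k, (u i (k + 1) + u i k) ^ 2 ≤ 2 ^ 2 * S := by
    have shift (i : ι) : ∑ k, u i (k + 1) ^ 2 = ∑ k, u i k ^ 2 :=
      Equiv.sum_comp (Equiv.addRight 1) fun k => u i k ^ 2
    calc ∑ i, ∑ k, (u i (k + 1) + u i k) ^ 2
        ≤ ∑ i, ∑ k, 2 * (u i (k + 1) ^ 2 + u i k ^ 2) := by gcongr; exact add_sq_le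
      _ = 2 ^ 2 * S := by
        simp only [← mul_sum, sum_add_distrib, shift, ← hS]
        ring
  have variation_le : ∑ i, ∑ k, |Δ_[1] (fun j => u i j ^ 2) k| ≤ 2 * (√S * √P) := by
    calc ∑ i, ∑ k, |Δ_[1] (fun j => u i j ^ 2) k|
        = ∑ q : ι × ZMod N, |u q.1 (q.2 + 1) + u q.1 q.2| * |Δ_[1] (u q.1) q.2| := by
          simp only [Fintype.sum_prod_type, fwdDiff, sq_sub_sq, abs_mul]
      _ ≤ √(∑ i, ∑ k, (u i (k + 1) + u i k) ^ 2) * √P := by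
          simpa only [sq_abs, Fintype.sum_prod_type] using Real.sum_mul_le_sqrt_mul_sqrt univ
            (fun q : ι × ZMod N => |u q.1 (q.2 + 1) + u q.1 q.2|) fun q => |Δ_[1] (u q.1) q.2|
      _ ≤ √(2 ^ 2 * S) * √P := by gcongr
      _ = 2 * (√S * √P) := by
          rw [Real.sqrt_mul (by positivity), Real.sqrt_sq zero_le_two, mul_assoc]
  calc ∑ i, u i (c i) ^ 2
      ≤ ∑ i, ((∑ k, u i k ^ 2) / N + (∑ k, |Δ_[1] (fun j => u i j ^ 2) k|) / 2) :=
        sum_le_sum fun i _ => le_average_add_half_sum_abs_fwdDiff (fun j => u i j ^ 2) (c i)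
    _ = S / N + (∑ i, ∑ k, |Δ_[1] (fun j => u i j ^ 2) k|) / 2 := by
        rw [sum_add_distrib, ← sum_div, ← sum_div]
    _ ≤ S / N + √S * √P := by linarith

end Cycle

section Ladyzhenskaya

variable {N : ℕ} [NeZero N]

lemma sum_pow_four_le_mul_of_section_le {α β : Type*} [Fintype α] [Fintype β] [Nonempty α]
    [Nonempty β] {u : α × β → ℝ} {A B : ℝ} (hA : ∀ c : β → α, ∑ y, u (c y, y) ^ 2 ≤ A)
    (hB : ∀ c : α → β, ∑ x, u (x, c x) ^ 2 ≤ B) :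
    ∑ q, u q ^ 4 ≤ A * B := by
  choose a ha using fun y => Finite.exists_max fun x => u (x, y) ^ 2
  choose b hb using fun x => Finite.exists_max fun y => u (x, y) ^ 2
  have hA₀ : 0 ≤ A := (sum_nonneg fun y _ => sq_nonneg (u (a y, y))).trans (hA a)
  calc ∑ q, u q ^ 4 ≤ ∑ q : α × β, u (a q.2, q.2) ^ 2 * u (q.1, b q.1) ^ 2 := by
        refine sum_le_sum fun q _ => ?_
        rw [show u q ^ 4 = u q ^ 2 * u q ^ 2 by ring]
        exact mul_le_mul (ha q.2 q.1) (hb q.1 q.2) (sq_nonneg _) (sq_nonneg _)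
    _ = (∑ y, u (a y, y) ^ 2) * ∑ x, u (x, b x) ^ 2 := by
        rw [sum_mul_sum, Fintype.sum_prod_type, sum_comm]
    _ ≤ A * B := mul_le_mul (hA a) (hB b) (sum_nonneg fun _ _ => sq_nonneg _) hA₀

lemma sum_pow_four_le_of_zmod_prod (v : ZMod N × ZMod N → ℝ) :
    ∑ q, v q ^ 4 ≤ (∑ q, v q ^ 2) *
      (2 * (∑ q, v q ^ 2) / (N : ℝ) ^ 2 + ∑ q, Δ_[(1, 0)] v q ^ 2 + ∑ q, Δ_[(0, 1)] v q ^ 2) := by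
  set S := ∑ q, v q ^ 2 with hS
  set P := ∑ q, Δ_[(1, 0)] v q ^ 2 with hP
  set Q := ∑ q, Δ_[(0, 1)] v q ^ 2 with hQ
  have section_fst (c : ZMod N → ZMod N) : ∑ y, v (c y, y) ^ 2 ≤ S / N + √S * √P := by
    have h := sum_sq_section_le (fun y x => v (x, y)) c
    simpa [hS, hP, Fintype.sum_prod_type_right, fwdDiff] using h
  have section_snd (c : ZMod N → ZMod N) : ∑ x, v (x, c x) ^ 2 ≤ S / N + √S * √Q := by
    have h := sum_sq_section_le (fun x y => v (x, y)) c
    simpa [hS, hQ, Fintype.sum_prod_type, fwdDiff] using h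
  have hS_sq : √S ^ 2 = S := Real.sq_sqrt (by positivity)
  have hP_sq : √P ^ 2 = P := Real.sq_sqrt (by positivity)
  have hQ_sq : √Q ^ 2 = Q := Real.sq_sqrt (by positivity)
  calc ∑ q, v q ^ 4 ≤ (S / N + √S * √P) * (S / N + √S * √Q) :=
        sum_pow_four_le_mul_of_section_le section_fst section_snd
    _ = S * ((√S / N + √P) * (√S / N + √Q)) := by
        rw [← hS_sq, Real.sqrt_sq (Real.sqrt_nonneg S)]
        ring
    _ ≤ S * (2 * (√S / N) ^ 2 + √P ^ 2 + √Q ^ 2) := by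
        gcongr
        nlinarith [sq_nonneg (√P - √Q), sq_nonneg (√S / N - √P), sq_nonneg (√S / N - √Q)]
    _ = _ := by rw [div_pow, hS_sq, hP_sq, hQ_sq, mul_div_assoc]

lemma sum_pow_four_le_of_grid (u : Grid N → ℝ) :
    ∑ p, u p ^ 4 ≤
      ((∑ p, u p ^ 2) / N + √(∑ p, u p ^ 2) * √(∑ p, Δ_[(1, 0, 0)] u p ^ 2)) *
      (2 * (∑ p, u p ^ 2) / (N : ℝ) ^ 2 +
        ∑ p, Δ_[(0, 1, 0)] u p ^ 2 + ∑ p, Δ_[(0, 0, 1)] u p ^ 2) := by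
  set S := ∑ p, u p ^ 2 with hS
  have slice_le (x : ZMod N) :
      ∑ q, u (x, q) ^ 2 ≤ S / N + √S * √(∑ p, Δ_[(1, 0, 0)] u p ^ 2) := by
    have h := sum_sq_section_le (fun q x => u (x, q)) fun _ => x
    have sum_slices (F : Grid N → ℝ) : ∑ q, ∑ x, F (x, q) = ∑ p, F p :=
      (Fintype.sum_prod_type_right F).symm
    have fwdDiff_fst (q : ZMod N × ZMod N) (x : ZMod N) :
        Δ_[1] (fun x => u (x, q)) x = Δ_[(1, 0, 0)] u (x, q) := by
      simp [fwdDiff, Prod.mk_zero_zero]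
    simp only [fwdDiff_fst] at h
    rwa [sum_slices fun p => u p ^ 2, sum_slices fun p => Δ_[(1, 0, 0)] u p ^ 2] at h
  have fwdDiff_slice (x : ZMod N) (e q : ZMod N × ZMod N) :
      Δ_[e] (fun r => u (x, r)) q = Δ_[(0, e)] u (x, q) := by
    simp [fwdDiff]
  have slice_pow_four_le (x : ZMod N) := sum_pow_four_le_of_zmod_prod fun q => u (x, q)
  simp only [fwdDiff_slice] at slice_pow_four_le
  rw [Fintype.sum_prod_type]
  refine (sum_le_sum fun x _ => (slice_pow_four_le x).trans
    (mul_le_mul_of_nonneg_right (slice_le x) (by positivity))).trans_eq ?_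
  simp only [← mul_sum, sum_add_distrib, ← sum_div, hS, Fintype.sum_prod_type]

end Ladyzhenskaya

section Grid

variable {N : ℕ}

/-- The unit steps of the grid in the three coordinate directions. -/
def gridStep (N : ℕ) : Fin 3 → Grid N := ![(1, 0, 0), (0, 1, 0), (0, 0, 1)]

lemma nsmul_gridStep (i : Fin 3) : N • gridStep N i = 0 := by
  fin_cases i <;> simp [gridStep]

lemma lap_eq_smul_sum_secondDiff (f : Grid N → ℝ) :
    lap f = (N : ℝ) ^ 2 • ∑ i, secondDiff (gridStep N i) f := by
  funext ⟨x, y, z⟩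
  simp [lap, Dx2, Dy2, Dz2, Fin.sum_univ_three, secondDiff, gridStep, fwdDiff, ← sub_eq_add_neg]
  ring

lemma lap_one : lap (1 : Grid N → ℝ) = 0 := by
  funext p
  simp [lap, Dx2, Dy2, Dz2]
  norm_num

/-- The pointwise product of the difference quotients of `f` and `g` in the direction `e`, for mesh
size `1 / N`. -/
def diffQuotMul (e : Grid N) (f g : Grid N → ℝ) : Grid N → ℝ :=
  (N : ℝ) ^ 2 • (Δ_[e] f * Δ_[e] g)

lemma diffQuotMul_neg (e : Grid N) (f g : Grid N → ℝ) :
    diffQuotMul (-e) f g = fun p => diffQuotMul e f g (p - e) := by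
  funext p
  simp only [diffQuotMul, fwdDiff, Pi.smul_apply, Pi.mul_apply, smul_eq_mul, ← sub_eq_add_neg,
    sub_add_cancel]
  ring

lemma lap_mul (f g : Grid N → ℝ) :
    lap (f * g) = f * lap g + g * lap f +
      ∑ i, diffQuotMul (gridStep N i) f g + ∑ i, diffQuotMul (-gridStep N i) f g := by
  simp only [lap_eq_smul_sum_secondDiff, secondDiff_mul, sum_add_distrib, smul_add, diffQuotMul,
    ← mul_sum, ← smul_sum, mul_smul_comm]

variable [NeZero N]

-- With `E` the energy and `P` its part in the first direction, AM-GM on the mixed term leaves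
-- `N (E / 2 + P / 4) (3 E / 2 - P)`.
lemma sum_pow_four_le_of_four_mul_sum_sq_le {u : Grid N → ℝ}
    (hu : 4 * ∑ p, u p ^ 2 ≤ (N : ℝ) ^ 2 * dirichletEnergy (gridStep N) u) :
    ∑ p, u p ^ 4 ≤ 3 / 4 * N * dirichletEnergy (gridStep N) u ^ 2 := by
  have hN : (0 : ℝ) < N := Nat.cast_pos.mpr (NeZero.pos N)
  set S := ∑ p, u p ^ 2
  set E := dirichletEnergy (gridStep N) u with hE
  set P := ∑ p, Δ_[(1, 0, 0)] u p ^ 2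
  set Q := ∑ p, Δ_[(0, 1, 0)] u p ^ 2
  set R := ∑ p, Δ_[(0, 0, 1)] u p ^ 2
  have hE_eq : E = P + Q + R := by
    rw [hE, dirichletEnergy, Fin.sum_univ_three]
    rfl
  have hS : 0 ≤ S := by positivity
  have hP : 0 ≤ P := by positivity
  have hS_div : S / (N : ℝ) ^ 2 ≤ E / 4 := by
    rw [div_le_div_iff₀ (by positivity) (by norm_num)]
    linarith
  have am_gm : √S * √P ≤ S / N + N * P / 4 := by
    have h := two_mul_le_add_sq (√S / √N) (√N * √P / 2)
    have hcancel : 2 * (√S / √N) * (√N * √P / 2) = √S * √P := by field_simp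
    rwa [hcancel, div_pow, div_pow, mul_pow, Real.sq_sqrt hS, Real.sq_sqrt hP,
      Real.sq_sqrt hN.le, show (2 : ℝ) ^ 2 = 4 by norm_num] at h
  have first_factor : S / N + √S * √P ≤ N * (E / 2 + P / 4) := by
    have hSN : S / N = N * (S / (N : ℝ) ^ 2) := by field_simp
    nlinarith
  have second_factor : 2 * S / (N : ℝ) ^ 2 + Q + R ≤ 3 / 2 * E - P := by
    rw [mul_div_assoc]
    linarith
  have hE₀ : 0 ≤ E := dirichletEnergy_nonneg _ _
  calc ∑ p, u p ^ 4 ≤ (S / N + √S * √P) * (2 * S / (N : ℝ) ^ 2 + Q + R) :=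
        sum_pow_four_le_of_grid u
    _ ≤ N * (E / 2 + P / 4) * (3 / 2 * E - P) := by gcongr
    _ ≤ 3 / 4 * N * E ^ 2 := by
        nlinarith [mul_nonneg hN.le (mul_nonneg hP hE₀),
          mul_nonneg hN.le (mul_nonneg hP hP)]

lemma sum_fwdDiff_pow_four_le (f : Grid N → ℝ) (i : Fin 3) :
    ∑ p, Δ_[gridStep N i] f p ^ 4 ≤
      3 / 4 * N * dirichletEnergy (gridStep N) (Δ_[gridStep N i] f) ^ 2 := by
  refine sum_pow_four_le_of_four_mul_sum_sq_le
    ((four_mul_sum_fwdDiff_sq_le (nsmul_gridStep i) f).trans ?_)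
  gcongr
  exact single_le_sum (f := fun j => ∑ p, Δ_[gridStep N j] (Δ_[gridStep N i] f) p ^ 2)
    (fun _ _ => by positivity) (mem_univ i)

end Grid

section Norms

variable {N : ℕ} [NeZero N]

lemma norm2_eq_mul_norm_toLp (f : Grid N → ℝ) :
    norm2 f = √(1 / (N : ℝ) ^ 3) * ‖WithLp.toLp 2 f‖ := by
  rw [norm2, Real.sqrt_mul (by positivity), EuclideanSpace.norm_eq]
  simp

lemma norm2_nonneg (f : Grid N → ℝ) : 0 ≤ norm2 f := Real.sqrt_nonneg _

lemma norm2_zero : norm2 (0 : Grid N → ℝ) = 0 := by simp [norm2]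

lemma norm2_one : norm2 (1 : Grid N → ℝ) = 1 := by
  have hN : (N : ℝ) ≠ 0 := NeZero.ne _
  have average_one : 1 / (N : ℝ) ^ 3 * ∑ p : Grid N, (1 : Grid N → ℝ) p ^ 2 = 1 := by
    simp
    field_simp
  rw [norm2, average_one, Real.sqrt_one]

lemma norm2_add_le (f g : Grid N → ℝ) : norm2 (f + g) ≤ norm2 f + norm2 g := by
  simp only [norm2_eq_mul_norm_toLp, ← mul_add, WithLp.toLp_add]
  gcongr
  exact norm_add_le _ _

lemma norm2_sum_le {ι : Type*} (s : Finset ι) (F : ι → Grid N → ℝ) :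
    norm2 (∑ i ∈ s, F i) ≤ ∑ i ∈ s, norm2 (F i) :=
  le_sum_of_subadditive norm2 norm2_zero.le norm2_add_le s F

lemma norm2_translate (f : Grid N → ℝ) (a : Grid N) : norm2 (fun p => f (p - a)) = norm2 f := by
  have translate : ∑ p, f (p - a) ^ 2 = ∑ p, f p ^ 2 :=
    Equiv.sum_comp (Equiv.subRight a) fun p => f p ^ 2
  rw [norm2, norm2, translate]

lemma abs_le_normInf (f : Grid N → ℝ) (p : Grid N) : |f p| ≤ normInf f :=
  le_ciSup (f := fun p => |f p|) (Set.finite_range _).bddAbove p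

lemma normInf_one : normInf (1 : Grid N → ℝ) = 1 := by simp [normInf]

lemma norm2_mul_le (f g : Grid N → ℝ) : norm2 (f * g) ≤ normInf f * norm2 g := by
  have hf : 0 ≤ normInf f := (abs_nonneg _).trans (abs_le_normInf f 0)
  rw [norm2, norm2, ← Real.sqrt_sq hf, ← Real.sqrt_mul (sq_nonneg _), mul_left_comm,
    mul_sum _ _ (normInf f ^ 2)]
  gcongr √(_ * ∑ p, ?_)
  rw [Pi.mul_apply, mul_pow, ← sq_abs (f _)]
  gcongr
  exact abs_le_normInf f _

lemma norm2_lap_sq (f : Grid N → ℝ) :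
    norm2 (lap f) ^ 2 = ∑ i, N * dirichletEnergy (gridStep N) (Δ_[gridStep N i] f) := by
  rw [norm2, Real.sq_sqrt (by positivity), ← mul_sum, ← sum_sq_sum_secondDiff]
  simp only [lap_eq_smul_sum_secondDiff, Pi.smul_apply, Finset.sum_apply, smul_eq_mul, mul_pow,
    ← mul_sum]
  field_simp

lemma norm2_diffQuotMul_le (f g : Grid N → ℝ) (i : Fin 3) :
    norm2 (diffQuotMul (gridStep N i) f g) ≤
      √3 / 2 * (√(N * dirichletEnergy (gridStep N) (Δ_[gridStep N i] f)) *
        √(N * dirichletEnergy (gridStep N) (Δ_[gridStep N i] g))) := by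
  set u := Δ_[gridStep N i] f with hu
  set v := Δ_[gridStep N i] g with hv
  set A := dirichletEnergy (gridStep N) u
  set B := dirichletEnergy (gridStep N) v
  have hA : 0 ≤ A := dirichletEnergy_nonneg _ _
  have hB : 0 ≤ B := dirichletEnergy_nonneg _ _
  have holder : ∑ p, (u p * v p) ^ 2 ≤ 3 / 4 * N * (A * B) := by
    have pow_four (a : ℝ) : a ^ 4 = (a ^ 2) ^ 2 := by ring
    refine le_of_sq_le_sq ?_ (by positivity)
    calc (∑ p, (u p * v p) ^ 2) ^ 2 ≤ (∑ p, u p ^ 4) * ∑ p, v p ^ 4 := by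
          simpa only [mul_pow, pow_four] using
            sum_mul_sq_le_sq_mul_sq univ (fun p => u p ^ 2) fun p => v p ^ 2
      _ ≤ (3 / 4 * N * A ^ 2) * (3 / 4 * N * B ^ 2) := by
          gcongr <;> exact sum_fwdDiff_pow_four_le _ i
      _ = (3 / 4 * N * (A * B)) ^ 2 := by ring
  have hsq : 1 / (N : ℝ) ^ 3 * ∑ p, diffQuotMul (gridStep N i) f g p ^ 2 ≤
      3 / 2 ^ 2 * ((N * A) * (N * B)) := by
    calc 1 / (N : ℝ) ^ 3 * ∑ p, diffQuotMul (gridStep N i) f g p ^ 2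
        = N * ∑ p, (u p * v p) ^ 2 := by
          simp only [diffQuotMul, Pi.smul_apply, Pi.mul_apply, smul_eq_mul, mul_pow _ _ 2,
            ← mul_sum, hu, hv]
          field_simp
      _ ≤ N * (3 / 4 * N * (A * B)) := by gcongr
      _ = _ := by ring
  refine (Real.sqrt_le_sqrt hsq).trans_eq ?_
  rw [Real.sqrt_mul (by positivity), Real.sqrt_mul (by positivity), Real.sqrt_div (by norm_num),
    Real.sqrt_sq zero_le_two]

lemma sum_norm2_diffQuotMul_le (f g : Grid N → ℝ) :
    ∑ i, norm2 (diffQuotMul (gridStep N i) f g) ≤ √3 / 2 * (norm2 (lap f) * norm2 (lap g)) := by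
  refine (sum_le_sum fun i _ => norm2_diffQuotMul_le f g i).trans ?_
  rw [← mul_sum, ← Real.sqrt_sq (norm2_nonneg (lap f)), ← Real.sqrt_sq (norm2_nonneg (lap g)),
    norm2_lap_sq, norm2_lap_sq]
  gcongr
  exact Real.sum_sqrt_mul_sqrt_le _ (fun i => mul_nonneg N.cast_nonneg (dirichletEnergy_nonneg _ _))
    fun i => mul_nonneg N.cast_nonneg (dirichletEnergy_nonneg _ _)

end Norms

theorem norm2_lap_mul_le {N : ℕ} [NeZero N] (f g : Grid N → ℝ) :
    norm2 (lap (f * g)) ≤ normInf f * norm2 (lap g) + normInf g * norm2 (lap f) +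
      √3 * (norm2 (lap f) * norm2 (lap g)) := by
  have forward : norm2 (∑ i, diffQuotMul (gridStep N i) f g) ≤
      √3 / 2 * (norm2 (lap f) * norm2 (lap g)) :=
    (norm2_sum_le _ _).trans (sum_norm2_diffQuotMul_le f g)
  have backward : norm2 (∑ i, diffQuotMul (-gridStep N i) f g) ≤
      √3 / 2 * (norm2 (lap f) * norm2 (lap g)) := by
    refine (norm2_sum_le _ _).trans ?_
    simpa only [diffQuotMul_neg, norm2_translate] using sum_norm2_diffQuotMul_le f g
  rw [lap_mul]
  linarith [norm2_add_le (f * lap g + g * lap f + ∑ i, diffQuotMul (gridStep N i) f g)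
      (∑ i, diffQuotMul (-gridStep N i) f g),
    norm2_add_le (f * lap g + g * lap f) (∑ i, diffQuotMul (gridStep N i) f g),
    norm2_add_le (f * lap g) (g * lap f), norm2_mul_le f (lap g), norm2_mul_le g (lap f)]

lemma one_le_of_forall_normInf_le {N : ℕ} [NeZero N] {C₀ : ℝ}
    (hSob : ∀ f : Grid N → ℝ, normInf f ≤ C₀ * (norm2 f + norm2 (lap f))) : 1 ≤ C₀ := by
  simpa [normInf_one, norm2_one, lap_one, norm2_zero] using hSob 1

theorem stmt_14_general {N : ℕ} [NeZero N] (C₀ : ℝ)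
    (hSob : ∀ f : Grid N → ℝ, normInf f ≤ C₀ * (norm2 f + norm2 (lap f)))
    (f g : Grid N → ℝ) :
    norm2 (lap (fun p => f p * g p)) ≤
      (√3 + 2) * C₀ ^ 2 * (norm2 f + norm2 (lap f)) * (norm2 g + norm2 (lap g)) := by
  have hC : 1 ≤ C₀ := one_le_of_forall_normInf_le hSob
  have hC_sq : C₀ ≤ C₀ ^ 2 := le_self_pow₀ hC two_ne_zero
  set F := norm2 f + norm2 (lap f)
  set G := norm2 g + norm2 (lap g)
  have hF : norm2 (lap f) ≤ F := le_add_of_nonneg_left (norm2_nonneg f)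
  have hG : norm2 (lap g) ≤ G := le_add_of_nonneg_left (norm2_nonneg g)
  have hf : 0 ≤ norm2 (lap f) := norm2_nonneg _
  have hg : 0 ≤ norm2 (lap g) := norm2_nonneg _
  have hF₀ : 0 ≤ F := hf.trans hF
  have hG₀ : 0 ≤ G := hg.trans hG
  calc norm2 (lap (f * g))
      ≤ normInf f * norm2 (lap g) + normInf g * norm2 (lap f) +
          √3 * (norm2 (lap f) * norm2 (lap g)) := norm2_lap_mul_le f g
    _ ≤ C₀ * F * G + C₀ * G * F + √3 * (F * G) := by
        have := hSob f
        have := hSob g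
        gcongr
    _ ≤ C₀ ^ 2 * F * G + C₀ ^ 2 * G * F + √3 * (C₀ ^ 2 * (F * G)) := by
        have := le_mul_of_one_le_left (mul_nonneg hF₀ hG₀) (one_le_pow₀ hC (n := 2))
        gcongr ?_ * F * G + ?_ * G * F + √3 * ?_
    _ = (√3 + 2) * C₀ ^ 2 * F * G := by ring

theorem stmt_14 {N : ℕ} [NeZero N] (C₀ : ℝ)
    (hSob1 : ∀ f : Grid N → ℝ, gradNorm4 f ≤ C₀ * norm2 (lap f))
    (hSob2 : ∀ f : Grid N → ℝ, normInf f ≤ C₀ * (norm2 f + norm2 (lap f)))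
    (f g : Grid N → ℝ) :
    norm2 (lap (fun p => f p * g p)) ≤
      (Real.sqrt 3 + 2) * C₀ ^ 2 * (norm2 f + norm2 (lap f)) * (norm2 g + norm2 (lap g)) :=
  stmt_14_general C₀ hSob2 f g
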